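/- Let X be a Hausdorff topological space with a continuous action of ℂ* = ℂ∖{0} having only finitely many fixed points and such that every point of X converges, as η → 0, to some fixed point. Let G be a finite group acting on X by homeomorphisms, with the G-action commuting with the ℂ*-action. Let Y = X/G with the quotient topology and the induced ℂ*-action, and let π : X → Y be the quotient map. On the fixed points of X (respectively of Y), let ≺ be the reflexive-transitive closure of the relation x ≺₀ x' ⟺ cl(X_x) ∩ X_{x'} ≠ ∅ (respectively y ≺₀ y' ⟺ cl(Y_y) ∩ Y_{y'} ≠ ∅). Then for any fixed points x, x' of X: π(x) ≺ π(x') if and only if there exists g ∈ G with x ≺ g·x'. -/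

import Mathlib

/-!
The quotient map `π : X → X/G` of a finite group is both open and closed. Closedness makes the
filter of neighbourhoods of `π(a)` pull back to that of the finite orbit `G • a`. As punctured discs
are connected and `X` is Hausdorff, a curve `η ↦ η • u` which tends to this orbit must tend to one
of its points, so `π⁻¹((X/G)_{π(a)})` is the finite union of the attracting sets of the points
`g • a`. Likewise `ℂ*` is connected, so a `ℂ*`-orbit inside a finite `G`-orbit is a single point and
`π(a)` is fixed only if `a` is. Openness of `π` makes preimages commute with closure, and closure
commutes with finite unions; hence `π(a) ≺₀ π(b)` exactly when `a ≺₀ g • b` for some `g`, and chains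
in `X/G` lift one step at a time.
-/

open Filter Topology

/-- The filter of punctured neighbourhoods of `0` in `ℂ`, restricted to `ℂ*`. -/
noncomputable def zeroFilter : Filter ℂˣ := Filter.comap (Units.val) (𝓝[≠] (0 : ℂ))

/-- A point is fixed if it is fixed by every `η ∈ ℂ*`. -/
def IsCFixed {X : Type*} [MulAction ℂˣ X] (x : X) : Prop := ∀ η : ℂˣ, η • x = x

/-- The attracting set of a point `x₀` : the points converging to `x₀` as `η → 0`. -/
noncomputable def attractSet (X : Type*) [TopologicalSpace X] [MulAction ℂˣ X] (x₀ : X) :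
    Set X :=
  {x | Filter.Tendsto (fun η : ℂˣ => η • x) zeroFilter (𝓝 x₀)}

/-- The one-step relation `x ≺₀ x'` on fixed points : `cl(X_x) ∩ X_{x'} ≠ ∅`. -/
noncomputable def precRel (X : Type*) [TopologicalSpace X] [MulAction ℂˣ X]
    (a b : X) : Prop :=
  IsCFixed a ∧ IsCFixed b ∧ (closure (attractSet X a) ∩ attractSet X b).Nonempty

section Quot

variable {X : Type*} [TopologicalSpace X] [MulAction ℂˣ X]
variable (G : Type*) [Group G] [MulAction G X] [SMulCommClass ℂˣ G X]

/-- Since the `G`-action commutes with the `ℂ*`-action, the `ℂ*`-action descends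
to the quotient `X/G`. -/
noncomputable def qsmul (η : ℂˣ) :
    Quotient (MulAction.orbitRel G X) → Quotient (MulAction.orbitRel G X) :=
  Quotient.map (fun x => η • x) (by
    intro a b hab
    obtain ⟨g, rfl⟩ := hab
    exact ⟨g, (smul_comm η g b).symm⟩)

/-- Fixed points of `X/G` under the induced `ℂ*`-action. -/
def qIsFixed (y : Quotient (MulAction.orbitRel G X)) : Prop :=
  ∀ η : ℂˣ, qsmul G η y = y

/-- Attracting sets in `X/G` under the induced `ℂ*`-action, for the quotient topology. -/
noncomputable def qAttract (y₀ : Quotient (MulAction.orbitRel G X)) :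
    Set (Quotient (MulAction.orbitRel G X)) :=
  {y | Filter.Tendsto (fun η : ℂˣ => qsmul G η y) zeroFilter (𝓝 y₀)}

/-- The one-step relation on fixed points of `X/G`. -/
noncomputable def qPrecRel (a b : Quotient (MulAction.orbitRel G X)) : Prop :=
  qIsFixed G a ∧ qIsFixed G b ∧ (closure (qAttract G a) ∩ qAttract G b).Nonempty

theorem exists_reflTransGen_of_forall_exists_lift {α β : Type*} {r : α → α → Prop}
    {s : β → β → Prop} {f : α → β} (hlift : ∀ a c, s (f a) c → ∃ b, f b = c ∧ r a b)
    {a : α} {c : β} (h : Relation.ReflTransGen s (f a) c) :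
    ∃ b, f b = c ∧ Relation.ReflTransGen r a b := by
  induction h with
  | refl => exact ⟨a, rfl, .refl⟩
  | tail _ hstep ih =>
    obtain ⟨b, rfl, hab⟩ := ih
    obtain ⟨d, rfl, hbd⟩ := hlift b _ hstep
    exact ⟨d, rfl, hab.tail hbd⟩

section PreconnectedBasis

variable {T Y ι : Type*} [TopologicalSpace T] [TopologicalSpace Y] {l : Filter T}
  {p : ι → Prop} {V : ι → Set T} {f : T → Y}

theorem tendsto_nhdsSet_or_of_separatedNhds (hl : l.HasBasis p V)
    (hV : ∀ i, p i → IsPreconnected (V i)) (hf : Continuous f) {S S' : Set Y}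
    (hS : SeparatedNhds S S') (h : Tendsto f l (𝓝ˢ (S ∪ S'))) :
    Tendsto f l (𝓝ˢ S) ∨ Tendsto f l (𝓝ˢ S') := by
  obtain ⟨A, B, hA, hB, hSA, hSB, hAB⟩ := hS
  have hA' : 𝓝ˢ S ≤ 𝓟 A := le_principal_iff.2 (hA.mem_nhdsSet.2 hSA)
  have hB' : 𝓝ˢ S' ≤ 𝓟 B := le_principal_iff.2 (hB.mem_nhdsSet.2 hSB)
  have hAB' : Disjoint (𝓟 A) (𝓟 B) := disjoint_principal_principal.2 hAB
  rw [nhdsSet_union] at h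
  obtain ⟨i, hi, hVi⟩ := hl.mem_iff.1 (h (union_mem_sup (hA' (mem_principal_self A))
    (hB' (mem_principal_self B))))
  rcases ((hV i hi).image f hf.continuousOn).subset_or_subset hA hB hAB
    (Set.image_subset_iff.2 hVi) with hfA | hfB
  · have hlA : Tendsto f l (𝓟 A) :=
      tendsto_principal.2 (hl.mem_iff.2 ⟨i, hi, Set.image_subset_iff.1 hfA⟩)
    exact Or.inl ((hAB'.mono hlA hB').left_le_of_le_sup_right h)
  · have hlB : Tendsto f l (𝓟 B) :=
      tendsto_principal.2 (hl.mem_iff.2 ⟨i, hi, Set.image_subset_iff.1 hfB⟩)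
    exact Or.inr ((hAB'.symm.mono hlB hA').left_le_of_le_sup_left h)

theorem exists_tendsto_nhds_of_tendsto_nhdsSet [T2Space Y] [l.NeBot] (hl : l.HasBasis p V)
    (hV : ∀ i, p i → IsPreconnected (V i)) (hf : Continuous f) {S : Set Y} (hS : S.Finite)
    (h : Tendsto f l (𝓝ˢ S)) : ∃ y ∈ S, Tendsto f l (𝓝 y) := by
  induction S, hS using Set.Finite.induction_on with
  | empty =>
    rw [nhdsSet_empty] at h
    exact absurd (le_bot_iff.1 h) map_neBot.ne
  | @insert y S hy hS ih =>
    have hsep : SeparatedNhds {y} S :=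
      .of_finite (Set.finite_singleton y) hS (Set.disjoint_singleton_left.2 hy)
    rcases tendsto_nhdsSet_or_of_separatedNhds hl hV hf hsep h with h | h
    · exact ⟨y, Set.mem_insert y S, by rwa [nhdsSet_singleton] at h⟩
    · obtain ⟨z, hz, hfz⟩ := ih h
      exact ⟨z, Set.mem_insert_of_mem y hz, hfz⟩

end PreconnectedBasis

section FiniteGroupQuotient

variable {H Y : Type*} [Group H] [MulAction H Y]

theorem quotientMk_smul (h : H) (y : Y) :
    Quotient.mk (MulAction.orbitRel H Y) (h • y) = Quotient.mk _ y :=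
  Quotient.sound ⟨h, rfl⟩

theorem quotientMk_preimage_singleton (y : Y) :
    Quotient.mk (MulAction.orbitRel H Y) ⁻¹' {Quotient.mk _ y} = MulAction.orbit H y :=
  Set.ext fun _ => Quotient.eq

variable [TopologicalSpace Y] [Finite H] [ContinuousConstSMul H Y]

theorem isClosedMap_quotientMk_of_finite :
    IsClosedMap (Quotient.mk (MulAction.orbitRel H Y)) := by
  let : TopologicalSpace H := ⊥
  have : DiscreteTopology H := ⟨rfl⟩
  have : ContinuousSMul H Y := ⟨continuous_prod_of_discrete_left.2 continuous_const_smul⟩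
  exact MulAction.isClosedMap_quotient

theorem comap_quotientMk_nhds (y : Y) :
    comap (Quotient.mk (MulAction.orbitRel H Y)) (𝓝 (Quotient.mk _ y)) =
      𝓝ˢ (MulAction.orbit H y) := by
  rw [isClosedMap_quotientMk_of_finite.comap_nhds_eq continuous_quot_mk,
    quotientMk_preimage_singleton]

end FiniteGroupQuotient

/-- The exponential map as a parametrisation of `ℂ*` by `ℂ`. -/
noncomputable def expUnit (z : ℂ) : ℂˣ := Units.mk0 (Complex.exp z) (Complex.exp_ne_zero z)

theorem continuous_expUnit : Continuous expUnit :=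
  Units.isEmbedding_val₀.continuous_iff.2 Complex.continuous_exp

theorem expUnit_surjective : Function.Surjective expUnit := fun η =>
  ⟨Complex.log η, Units.ext (Complex.exp_log η.ne_zero)⟩

instance preconnectedSpace_complex_units : PreconnectedSpace ℂˣ :=
  ⟨expUnit_surjective.range_eq ▸ isPreconnected_range continuous_expUnit⟩

theorem isPreconnected_setOf_norm_lt {r : ℝ} (hr : 0 < r) :
    IsPreconnected {η : ℂˣ | ‖(η : ℂ)‖ < r} := by
  have hpre : expUnit ⁻¹' {η : ℂˣ | ‖(η : ℂ)‖ < r} = {z : ℂ | z.re < Real.log r} := by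
    ext z
    simp [expUnit, Complex.norm_exp, Real.lt_log_iff_exp_lt hr]
  rw [← Set.image_preimage_eq {η : ℂˣ | ‖(η : ℂ)‖ < r} expUnit_surjective, hpre]
  exact (convex_halfSpace_re_lt _).isPreconnected.image _ continuous_expUnit.continuousOn

theorem zeroFilter_hasBasis :
    zeroFilter.HasBasis (fun r : ℝ => 0 < r) fun r => {η : ℂˣ | ‖(η : ℂ)‖ < r} :=
  (Metric.nhdsWithin_basis_ball.comap Units.val).congr (fun _ => Iff.rfl) fun r _ => by
    ext η
    simp

instance zeroFilter_neBot : zeroFilter.NeBot := by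
  refine NeBot.comap_of_range_mem inferInstance ?_
  filter_upwards [self_mem_nhdsWithin] with z hz
  exact ⟨Units.mk0 z hz, rfl⟩

theorem IsCFixed.smul {H Y : Type*} [SMul H Y] [MulAction ℂˣ Y] [SMulCommClass ℂˣ H Y] {y : Y}
    (hy : IsCFixed y) (h : H) : IsCFixed (h • y) := fun η => by
  rw [smul_comm, hy η]

section Equivariance

variable {G} [ContinuousConstSMul G X]

theorem smul_mem_attractSet_smul {a u : X} (hu : u ∈ attractSet X a) (g : G) :
    g • u ∈ attractSet X (g • a) :=
  (Tendsto.const_smul hu g).congr fun η => (smul_comm η g u).symm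

theorem precRel.smul {a b : X} (h : precRel X a b) (g : G) : precRel X (g • a) (g • b) := by
  obtain ⟨ha, hb, u, hua, hub⟩ := h
  exact ⟨ha.smul g, hb.smul g, g • u,
    map_mem_closure (continuous_const_smul g) hua fun v hv => smul_mem_attractSet_smul hv g,
    smul_mem_attractSet_smul hub g⟩

end Equivariance

section Quotient

local notation "π" => Quotient.mk (MulAction.orbitRel G X)

variable [ContinuousSMul ℂˣ X] [Finite G]

theorem qIsFixed_mk_iff [T1Space X] {a : X} : qIsFixed G (π a) ↔ IsCFixed a := by
  refine ⟨fun h => ?_, fun h η => congrArg π (h η)⟩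
  have horbit : Set.range (fun η : ℂˣ => η • a) ⊆ MulAction.orbit G a := by
    rintro _ ⟨η, rfl⟩
    exact Quotient.exact (h η)
  have hconn : IsPreconnected (Set.range fun η : ℂˣ => η • a) :=
    isPreconnected_range (continuous_id.smul continuous_const)
  have hsub : (Set.range fun η : ℂˣ => η • a).Subsingleton :=
    Set.not_nontrivial_iff.1 fun hnt =>
      hconn.infinite_of_nontrivial hnt ((Set.finite_range _).subset horbit)
  exact fun η => hsub ⟨η, rfl⟩ ⟨1, one_smul _ a⟩

variable [T2Space X] [ContinuousConstSMul G X]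

theorem preimage_qAttract (a : X) :
    π ⁻¹' qAttract G (π a) = ⋃ g : G, attractSet X (g • a) := by
  ext u
  rw [Set.mem_iUnion]
  refine ⟨fun h => ?_, fun ⟨g, hg⟩ => ?_⟩
  · have horbit : Tendsto (fun η : ℂˣ => η • u) zeroFilter (𝓝ˢ (MulAction.orbit G a)) := by
      rw [← comap_quotientMk_nhds, tendsto_comap_iff]
      exact h
    obtain ⟨_, ⟨g, rfl⟩, hg⟩ := exists_tendsto_nhds_of_tendsto_nhdsSet zeroFilter_hasBasis
      (fun _ => isPreconnected_setOf_norm_lt) (continuous_id.smul continuous_const)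
      (Set.finite_range _) horbit
    exact ⟨g, hg⟩
  · rw [← quotientMk_smul g a]
    exact (continuous_quot_mk.tendsto (g • a)).comp hg

theorem preimage_closure_qAttract (a : X) :
    π ⁻¹' closure (qAttract G (π a)) = ⋃ g : G, closure (attractSet X (g • a)) := by
  rw [MulAction.isOpenQuotientMap_quotientMk.isOpenMap.preimage_closure_eq_closure_preimage
    continuous_quot_mk, preimage_qAttract, closure_iUnion_of_finite]

theorem qPrecRel_mk_iff {a b : X} : qPrecRel G (π a) (π b) ↔ ∃ g : G, precRel X a (g • b) := by
  constructor
  · rintro ⟨ha, hb, y, hya, hyb⟩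
    obtain ⟨u, rfl⟩ := Quotient.exists_rep y
    obtain ⟨g, hg⟩ := Set.mem_iUnion.1 ((preimage_closure_qAttract G a).subset hya)
    obtain ⟨k, hk⟩ := Set.mem_iUnion.1 ((preimage_qAttract G b).subset hyb)
    have h : precRel X (g • a) (k • b) :=
      ⟨((qIsFixed_mk_iff G).1 ha).smul g, ((qIsFixed_mk_iff G).1 hb).smul k, u, hg, hk⟩
    exact ⟨g⁻¹ * k, by simpa only [inv_smul_smul, mul_smul] using h.smul g⁻¹⟩
  · rintro ⟨g, ha, hb, u, hua, hub⟩
    have hua' : u ∈ ⋃ k : G, closure (attractSet X (k • a)) :=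
      Set.mem_iUnion.2 ⟨1, by rwa [one_smul]⟩
    have hub' : u ∈ ⋃ k : G, attractSet X (k • b) := Set.mem_iUnion.2 ⟨g, hub⟩
    have hb' : IsCFixed b := by simpa only [inv_smul_smul] using hb.smul g⁻¹
    exact ⟨(qIsFixed_mk_iff G).2 ha, (qIsFixed_mk_iff G).2 hb', π u,
      (preimage_closure_qAttract G a).superset hua', (preimage_qAttract G b).superset hub'⟩

theorem statement8_general (x x' : X) :
    Relation.ReflTransGen (qPrecRel G) (π x) (π x') ↔
      ∃ g : G, Relation.ReflTransGen (precRel X) x (g • x') := by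
  constructor
  · intro h
    have hlift : ∀ a c, qPrecRel G (π a) c → ∃ b, π b = c ∧ precRel X a b := by
      intro a c hac
      obtain ⟨b, rfl⟩ := Quotient.exists_rep c
      obtain ⟨g, hg⟩ := (qPrecRel_mk_iff G).1 hac
      exact ⟨g • b, quotientMk_smul g b, hg⟩
    obtain ⟨z, hz, hxz⟩ := exists_reflTransGen_of_forall_exists_lift hlift h
    obtain ⟨g, rfl⟩ := Quotient.exact hz
    exact ⟨g, hxz⟩
  · rintro ⟨g, hg⟩
    rw [← quotientMk_smul g x']
    exact hg.lift π fun a b hab => (qPrecRel_mk_iff G).2 ⟨1, by rwa [one_smul]⟩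

end Quotient

/-- Let `X` be Hausdorff with a continuous `ℂ*`-action having finitely many fixed
points and filtrable, and let a finite group `G` act on `X` by homeomorphisms,
commuting with the `ℂ*`-action. Then for fixed points `x, x'` of `X`, the images in
`X/G` satisfy `π(x) ≺ π(x')` iff `x ≺ g·x'` for some `g ∈ G`. -/
theorem statement8 [T2Space X] [ContinuousSMul ℂˣ X] [Finite G]
    (hGcont : ∀ g : G, Continuous (fun x : X => g • x))
    (hfin : {x : X | IsCFixed x}.Finite)
    (hfiltr : ∀ x : X, ∃ x₀ : X, IsCFixed x₀ ∧ x ∈ attractSet X x₀)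
    (x x' : X) (hx : IsCFixed x) (hx' : IsCFixed x') :
    Relation.ReflTransGen (qPrecRel G)
        (Quotient.mk (MulAction.orbitRel G X) x) (Quotient.mk (MulAction.orbitRel G X) x') ↔
      ∃ g : G, Relation.ReflTransGen (precRel X) x (g • x') := by
  have : ContinuousConstSMul G X := ⟨hGcont⟩
  exact statement8_general G x x'

end Quot
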